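/- There exists a constant C₀ > 0, depending only on α and β, such that for every δ > 0 there exist constants C > 0 and λ₀ > 0 (depending on δ, α, β) with the following property: for every real Dirichlet quasimode datum (u, λ, f) on the stadium S with λ ≥ λ₀, the boundary integral of w |∂_N u|² over the portion of ∂S ∩ W where w ≤ δ λ^{−2} satisfies ∫_{∂S ∩ W ∩ {w ≤ δ λ^{−2}}} w |∂_N u|² dl ≤ δ C₀ ‖u‖²_{L²(S)} + δ C λ^{−2} ‖f‖²_{L²(S)}. -/

import Mathlib

open MeasureTheory Real Set Filter

noncomputable section

/-- Partial derivative in the first (x) variable. -/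
def pdx (u : ℝ × ℝ → ℝ) (p : ℝ × ℝ) : ℝ := deriv (fun t => u (t, p.2)) p.1

/-- Partial derivative in the second (y) variable. -/
def pdy (u : ℝ × ℝ → ℝ) (p : ℝ × ℝ) : ℝ := deriv (fun t => u (p.1, t)) p.2

/-- The positive Laplacian `Δu = -u_xx - u_yy`. -/
def lap (u : ℝ × ℝ → ℝ) (p : ℝ × ℝ) : ℝ := -(pdx (pdx u) p) - (pdy (pdy u) p)

/-- The central rectangle `R = [-α,α] × [-β,β]`. -/
def Rect (α β : ℝ) : Set (ℝ × ℝ) := Icc (-α) α ×ˢ Icc (-β) β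

/-- The wings `W = W₊ ∪ W₋`, two half-discs of radius β centered at `(±α, 0)`. -/
def Wings (α β : ℝ) : Set (ℝ × ℝ) :=
  {p | (p.1 - α) ^ 2 + p.2 ^ 2 ≤ β ^ 2 ∧ α ≤ p.1} ∪
  {p | (p.1 + α) ^ 2 + p.2 ^ 2 ≤ β ^ 2 ∧ p.1 ≤ -α}

/-- The Bunimovich stadium `S = R ∪ W`. -/
def Stadium (α β : ℝ) : Set (ℝ × ℝ) := Rect α β ∪ Wings α β

/-- The boundary `∂S`: two horizontal segments and two semicircles. -/
def StadiumBoundary (α β : ℝ) : Set (ℝ × ℝ) :=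
  {p | |p.1| ≤ α ∧ (p.2 = β ∨ p.2 = -β)} ∪
  {p | (|p.1| - α) ^ 2 + p.2 ^ 2 = β ^ 2 ∧ α ≤ |p.1|}

/-- Boundary integral `∫_{∂S} g dl` of an integrand `g` depending on the boundary point
and the outward unit normal at that point. -/
def bdryInt (α β : ℝ) (g : ℝ × ℝ → ℝ × ℝ → ℝ) : ℝ :=
  (∫ x in (-α)..α, (g (x, β) (0, 1) + g (x, -β) (0, -1))) +
  β * ∫ θ in (-(π / 2))..(π / 2),
    (g (α + β * cos θ, β * sin θ) (cos θ, sin θ) +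
     g (-(α + β * cos θ), β * sin θ) (-cos θ, sin θ))

/-- Boundary integral `∫_{∂S ∩ W} g dl` over the two semicircles only. -/
def bdryIntW (α β : ℝ) (g : ℝ × ℝ → ℝ × ℝ → ℝ) : ℝ :=
  β * ∫ θ in (-(π / 2))..(π / 2),
    (g (α + β * cos θ, β * sin θ) (cos θ, sin θ) +
     g (-(α + β * cos θ), β * sin θ) (-cos θ, sin θ))

/-- The normal derivative `∂_N u = n₁ ∂_x u + n₂ ∂_y u` at a boundary point `p`
with outward unit normal `n`. -/
def nderiv (u : ℝ × ℝ → ℝ) (p n : ℝ × ℝ) : ℝ := n.1 * pdx u p + n.2 * pdy u p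

/-- A real Dirichlet quasimode datum `(u, λ, f)` on the stadium: `λ > 0`, `u` smooth on a
neighborhood of `S`, `u = 0` on `∂S`, and `(Δ - λ²) u = f` on `S`. -/
structure QMDatum (α β : ℝ) where
  u : ℝ × ℝ → ℝ
  lam : ℝ
  f : ℝ × ℝ → ℝ
  lam_pos : 0 < lam
  smooth : ∃ V : Set (ℝ × ℝ), IsOpen V ∧ Stadium α β ⊆ V ∧ ContDiffOn ℝ (⊤ : ℕ∞) u V
  dirichlet : ∀ p ∈ StadiumBoundary α β, u p = 0
  eqn : ∀ p ∈ Stadium α β, lap u p - lam ^ 2 * u p = f p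

open scoped Topology

/-!
The proof is a Rellich identity for the radial field `X = (x, y)`. Since the stadium contains the
disc of radius `β` about the origin and is convex, `p · n ≥ β` on its boundary, and pairing `Δu`
with `X u` gives `½ ∫_{∂S} (p · n) |∂_N u|² = -∫_S (X u) Δu`. There `Δu = λ² u + f`, and
`∫_S u (X u) = -∫_S u²`, while `‖X u‖` is bounded by `‖∇u‖`, hence by Green's identity by `λ ‖u‖`
and `‖f‖`. So the whole boundary energy `∫_{∂S} |∂_N u|²` is at most a constant times
`λ² ‖u‖² + ‖f‖²`, and on the region `w ≤ δλ⁻²` the weight only contributes the factor `δλ⁻²`.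
The cross terms in `f` are absorbed with a Poincaré inequality, which also comes from `X`. All of
this is applied to a smooth function on the whole plane that agrees with `u` near `S`.
-/

theorem two_mul_integral_mul_le {X : Type*} [MeasurableSpace X] {μ : Measure X} {f g : X → ℝ}
    (hf : Integrable (fun x => f x ^ 2) μ) (hg : Integrable (fun x => g x ^ 2) μ)
    (hfg : Integrable (fun x => f x * g x) μ) {a : ℝ} (ha : 0 < a) :
    2 * ∫ x, f x * g x ∂μ ≤ a * ∫ x, f x ^ 2 ∂μ + a⁻¹ * ∫ x, g x ^ 2 ∂μ := by
  have young (x : X) : 2 * (f x * g x) ≤ a * f x ^ 2 + a⁻¹ * g x ^ 2 := by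
    have hsq : 0 ≤ a⁻¹ * (a * f x - g x) ^ 2 := by positivity
    have hexp : a⁻¹ * (a * f x - g x) ^ 2 = a * f x ^ 2 + a⁻¹ * g x ^ 2 - 2 * (f x * g x) := by
      field_simp
      ring
    linarith
  simp only [← integral_const_mul]
  rw [← integral_add (hf.const_mul a) (hg.const_mul a⁻¹)]
  exact integral_mono (hfg.const_mul 2) ((hf.const_mul a).add (hg.const_mul a⁻¹)) young

theorem setIntegral_sublevel_mul_le {X : Type*} [MeasurableSpace X] {μ : Measure X} {s : Set X}
    {w g : X → ℝ} {ε : ℝ} (hs : MeasurableSet s) (hw : Measurable w) (hε : 0 ≤ ε)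
    (hg : IntegrableOn g s μ) (hwg : IntegrableOn (fun x => w x * g x) s μ)
    (hg0 : ∀ x ∈ s, 0 ≤ g x) :
    ∫ x in {x | x ∈ s ∧ w x ≤ ε}, w x * g x ∂μ ≤ ε * ∫ x in s, g x ∂μ := by
  have hsub : {x | x ∈ s ∧ w x ≤ ε} ⊆ s := fun x hx => hx.1
  have hmeas : MeasurableSet {x | x ∈ s ∧ w x ≤ ε} :=
    hs.inter (measurableSet_le hw measurable_const)
  calc ∫ x in {x | x ∈ s ∧ w x ≤ ε}, w x * g x ∂μ
      ≤ ∫ x in {x | x ∈ s ∧ w x ≤ ε}, ε * g x ∂μ :=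
        setIntegral_mono_on (hwg.mono_set hsub) ((hg.mono_set hsub).const_mul ε) hmeas
          fun x hx => mul_le_mul_of_nonneg_right hx.2 (hg0 x hx.1)
    _ = ε * ∫ x in {x | x ∈ s ∧ w x ≤ ε}, g x ∂μ := integral_const_mul ..
    _ ≤ ε * ∫ x in s, g x ∂μ :=
        mul_le_mul_of_nonneg_left (setIntegral_mono_set hg
          (ae_restrict_of_forall_mem hs hg0) hsub.eventuallyLE) hε

theorem intervalIntegral_neg_self {E : Type*} [NormedAddCommGroup E] [NormedSpace ℝ E] {f : ℝ → E}
    (hf : Continuous f) (a : ℝ) : ∫ x in (-a)..a, f x = ∫ x in 0..a, (f x + f (-x)) := by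
  have hneg : Continuous fun x => f (-x) := hf.comp continuous_neg
  rw [intervalIntegral.integral_add (hf.intervalIntegrable _ _) (hneg.intervalIntegrable _ _),
    intervalIntegral.integral_comp_neg, neg_zero, add_comm,
    intervalIntegral.integral_add_adjacent_intervals (hf.intervalIntegrable _ _)
      (hf.intervalIntegrable _ _)]

theorem exists_contDiff_eventuallyEq_nhdsSet {E F : Type*} [NormedAddCommGroup E]
    [NormedSpace ℝ E] [FiniteDimensional ℝ E] [NormedAddCommGroup F] [NormedSpace ℝ F] {n : ℕ∞}
    {S V : Set E} (hS : IsClosed S) (hV : IsOpen V) (hSV : S ⊆ V) {u : E → F}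
    (hu : ContDiffOn ℝ n u V) : ∃ v : E → F, ContDiff ℝ n v ∧ v =ᶠ[𝓝ˢ S] u := by
  obtain ⟨χ, hχ_zero, hχ_one, -⟩ := exists_contMDiffMap_zero_one_nhds_of_isClosed (n := n)
    (modelWithCornersSelf ℝ E) hV.isClosed_compl hS (disjoint_compl_left_iff_subset.2 hSV)
  have hχ : ContDiff ℝ n χ := χ.contMDiff.contDiff
  refine ⟨fun p => χ p • u p, contDiff_iff_contDiffAt.2 fun p => ?_, ?_⟩
  · by_cases hp : p ∈ V
    · exact hχ.contDiffAt.smul (hu.contDiffAt (hV.mem_nhds hp))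
    · refine (contDiffAt_const (c := (0 : F))).congr_of_eventuallyEq ?_
      filter_upwards [hχ_zero.filter_mono (nhds_le_nhdsSet hp)] with q hq
      simp only [hq, zero_smul]
  · filter_upwards [hχ_one] with p hp
    simp only [hp, one_smul]

section PartialDerivatives

variable {F G : ℝ × ℝ → ℝ}

theorem hasDerivAt_pdx (hF : Differentiable ℝ F) (x y : ℝ) :
    HasDerivAt (fun t => F (t, y)) (pdx F (x, y)) x :=
  (by fun_prop : DifferentiableAt ℝ (fun t => F (t, y)) x).hasDerivAt

theorem hasDerivAt_pdy (hF : Differentiable ℝ F) (x y : ℝ) :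
    HasDerivAt (fun t => F (x, t)) (pdy F (x, y)) y :=
  (by fun_prop : DifferentiableAt ℝ (fun t => F (x, t)) y).hasDerivAt

theorem pdx_eq_fderiv (hF : Differentiable ℝ F) : pdx F = fun p => fderiv ℝ F p (1, 0) := by
  ext ⟨x, y⟩
  exact (hasDerivAt_pdx hF x y).unique ((hF (x, y)).hasFDerivAt.comp_hasDerivAt x
    ((hasDerivAt_id x).prodMk (hasDerivAt_const x y)))

theorem pdy_eq_fderiv (hF : Differentiable ℝ F) : pdy F = fun p => fderiv ℝ F p (0, 1) := by
  ext ⟨x, y⟩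
  exact (hasDerivAt_pdy hF x y).unique ((hF (x, y)).hasFDerivAt.comp_hasDerivAt y
    ((hasDerivAt_const y x).prodMk (hasDerivAt_id y)))

theorem contDiff_pdx {m n : WithTop ℕ∞} (hF : ContDiff ℝ n F) (hmn : m + 1 ≤ n) :
    ContDiff ℝ m (pdx F) := by
  rw [pdx_eq_fderiv (hF.of_le (le_add_self.trans hmn) |>.differentiable one_ne_zero)]
  exact (hF.fderiv_right hmn).clm_apply contDiff_const

theorem contDiff_pdy {m n : WithTop ℕ∞} (hF : ContDiff ℝ n F) (hmn : m + 1 ≤ n) :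
    ContDiff ℝ m (pdy F) := by
  rw [pdy_eq_fderiv (hF.of_le (le_add_self.trans hmn) |>.differentiable one_ne_zero)]
  exact (hF.fderiv_right hmn).clm_apply contDiff_const

theorem pdx_pdy_comm (hF : ContDiff ℝ 2 F) (p : ℝ × ℝ) : pdx (pdy F) p = pdy (pdx F) p := by
  have hd : Differentiable ℝ F := hF.differentiable two_ne_zero
  have hdd : DifferentiableAt ℝ (fderiv ℝ F) p :=
    (hF.fderiv_right one_add_one_eq_two.le).differentiable one_ne_zero p
  have hsymm : IsSymmSndFDerivAt ℝ F p := hF.contDiffAt.isSymmSndFDerivAt (by simp)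
  rw [pdx_eq_fderiv ((contDiff_pdy hF one_add_one_eq_two.le).differentiable one_ne_zero),
    pdy_eq_fderiv ((contDiff_pdx hF one_add_one_eq_two.le).differentiable one_ne_zero),
    pdx_eq_fderiv hd, pdy_eq_fderiv hd]
  simp only
  rw [fderiv_clm_apply hdd (by fun_prop), fderiv_clm_apply hdd (by fun_prop)]
  simpa using hsymm.eq (1, 0) (0, 1)

theorem continuous_lap (hF : ContDiff ℝ 2 F) : Continuous (lap F) := by
  have hxx := contDiff_pdx (m := 0) (contDiff_pdx hF one_add_one_eq_two.le) (zero_add 1).le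
  have hyy := contDiff_pdy (m := 0) (contDiff_pdy hF one_add_one_eq_two.le) (zero_add 1).le
  exact hxx.continuous.neg.sub hyy.continuous

theorem pdx_add (hF : Differentiable ℝ F) (hG : Differentiable ℝ G) (p : ℝ × ℝ) :
    pdx (fun q => F q + G q) p = pdx F p + pdx G p :=
  ((hasDerivAt_pdx hF p.1 p.2).add (hasDerivAt_pdx hG p.1 p.2)).deriv

theorem pdy_add (hF : Differentiable ℝ F) (hG : Differentiable ℝ G) (p : ℝ × ℝ) :
    pdy (fun q => F q + G q) p = pdy F p + pdy G p :=
  ((hasDerivAt_pdy hF p.1 p.2).add (hasDerivAt_pdy hG p.1 p.2)).deriv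

theorem pdx_mul (hF : Differentiable ℝ F) (hG : Differentiable ℝ G) (p : ℝ × ℝ) :
    pdx (fun q => F q * G q) p = pdx F p * G p + F p * pdx G p :=
  ((hasDerivAt_pdx hF p.1 p.2).mul (hasDerivAt_pdx hG p.1 p.2)).deriv

theorem pdy_mul (hF : Differentiable ℝ F) (hG : Differentiable ℝ G) (p : ℝ × ℝ) :
    pdy (fun q => F q * G q) p = pdy F p * G p + F p * pdy G p :=
  ((hasDerivAt_pdy hF p.1 p.2).mul (hasDerivAt_pdy hG p.1 p.2)).deriv

theorem hasDerivAt_comp_curve (hF : Differentiable ℝ F) {a b : ℝ → ℝ} {a' b' t : ℝ}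
    (ha : HasDerivAt a a' t) (hb : HasDerivAt b b' t) :
    HasDerivAt (fun s => F (a s, b s)) (a' * pdx F (a t, b t) + b' * pdy F (a t, b t)) t := by
  have hsplit : ((a', b') : ℝ × ℝ) = a' • (1, 0) + b' • (0, 1) := by simp
  have hcomp := (hF (a t, b t)).hasFDerivAt.comp_hasDerivAt t (ha.prodMk hb)
  rw [hsplit, map_add, map_smul, map_smul] at hcomp
  simp only [pdx_eq_fderiv hF, pdy_eq_fderiv hF]
  exact hcomp

theorem deriv_along_curve_eq_zero {Γ : Set (ℝ × ℝ)} (hF : Differentiable ℝ F)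
    (hΓ : ∀ p ∈ Γ, F p = 0) {a b : ℝ → ℝ} {a' b' t : ℝ} (ha : HasDerivAt a a' t)
    (hb : HasDerivAt b b' t) (hmem : ∀ᶠ s in 𝓝 t, (a s, b s) ∈ Γ) :
    a' * pdx F (a t, b t) + b' * pdy F (a t, b t) = 0 := by
  refine (hasDerivAt_comp_curve hF ha hb).unique
    ((hasDerivAt_const t (0 : ℝ)).congr_of_eventuallyEq ?_)
  filter_upwards [hmem] with s hs using hΓ _ hs

theorem pdx_eventuallyEq_nhdsSet {S : Set (ℝ × ℝ)} (h : F =ᶠ[𝓝ˢ S] G) :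
    pdx F =ᶠ[𝓝ˢ S] pdx G := by
  filter_upwards [h.eventually_nhdsSet] with p hp
  have hline : Tendsto (fun t : ℝ => (t, p.2)) (𝓝 p.1) (𝓝 p) :=
    (by fun_prop : Continuous fun t : ℝ => (t, p.2)).tendsto p.1
  exact Filter.EventuallyEq.deriv_eq (hline.eventually hp)

theorem pdy_eventuallyEq_nhdsSet {S : Set (ℝ × ℝ)} (h : F =ᶠ[𝓝ˢ S] G) :
    pdy F =ᶠ[𝓝ˢ S] pdy G := by
  filter_upwards [h.eventually_nhdsSet] with p hp
  have hline : Tendsto (fun t : ℝ => (p.1, t)) (𝓝 p.2) (𝓝 p) :=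
    (by fun_prop : Continuous fun t : ℝ => (p.1, t)).tendsto p.2
  exact Filter.EventuallyEq.deriv_eq (hline.eventually hp)

theorem lap_eventuallyEq_nhdsSet {S : Set (ℝ × ℝ)} (h : F =ᶠ[𝓝ˢ S] G) :
    lap F =ᶠ[𝓝ˢ S] lap G :=
  (pdx_eventuallyEq_nhdsSet (pdx_eventuallyEq_nhdsSet h)).neg.sub
    (pdy_eventuallyEq_nhdsSet (pdy_eventuallyEq_nhdsSet h))

theorem nderiv_eq_of_eventuallyEq_nhdsSet {S : Set (ℝ × ℝ)} (h : F =ᶠ[𝓝ˢ S] G) {p : ℝ × ℝ}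
    (hp : p ∈ S) (n : ℝ × ℝ) : nderiv F p n = nderiv G p n := by
  simp only [nderiv, (pdx_eventuallyEq_nhdsSet h).self_of_nhdsSet hp,
    (pdy_eventuallyEq_nhdsSet h).self_of_nhdsSet hp]

theorem continuous_nderiv (hF : ContDiff ℝ 1 F) : Continuous ↿(nderiv F) := by
  have hx := contDiff_pdx (m := 0) hF (zero_add 1).le |>.continuous
  have hy := contDiff_pdy (m := 0) hF (zero_add 1).le |>.continuous
  unfold nderiv
  fun_prop

end PartialDerivatives

section RegionsBetweenGraphs

variable {S : Set (ℝ × ℝ)} {a b : ℝ} {l r : ℝ → ℝ}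

theorem setIntegral_eq_integral_slices {E : Type*} [NormedAddCommGroup E] [NormedSpace ℝ E]
    {g : ℝ × ℝ → E} (hS : MeasurableSet S) (hg : IntegrableOn g S) (hab : a ≤ b)
    (hlr : ∀ x ∈ Icc a b, l x ≤ r x)
    (hmem : ∀ x y, (x, y) ∈ S ↔ x ∈ Icc a b ∧ y ∈ Icc (l x) (r x)) :
    ∫ p in S, g p = ∫ x in a..b, ∫ y in (l x)..(r x), g (x, y) := by
  rw [← integral_indicator hS, Measure.volume_eq_prod,
    integral_prod _ ((integrable_indicator_iff hS).2 hg), intervalIntegral.integral_of_le hab,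
    ← integral_Icc_eq_integral_Ioc, ← integral_indicator measurableSet_Icc]
  congr 1 with x
  by_cases hx : x ∈ Icc a b
  · rw [indicator_of_mem hx, intervalIntegral.integral_of_le (hlr x hx),
      ← integral_Icc_eq_integral_Ioc, ← integral_indicator measurableSet_Icc]
    simp only [indicator, hmem, hx, true_and]
  · simp [indicator, hmem, hx]

theorem setIntegral_pdy_eq {G : ℝ × ℝ → ℝ} (hG : ContDiff ℝ 1 G) (hS : IsCompact S) (hab : a ≤ b)
    (hlr : ∀ x ∈ Icc a b, l x ≤ r x)
    (hmem : ∀ x y, (x, y) ∈ S ↔ x ∈ Icc a b ∧ y ∈ Icc (l x) (r x)) :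
    ∫ p in S, pdy G p = ∫ x in a..b, (G (x, r x) - G (x, l x)) := by
  have hc : Continuous (pdy G) := (contDiff_pdy (m := 0) hG (zero_add 1).le).continuous
  rw [setIntegral_eq_integral_slices hS.measurableSet (hc.continuousOn.integrableOn_compact hS)
    hab hlr hmem]
  congr 1 with x
  exact intervalIntegral.integral_eq_sub_of_hasDerivAt
    (fun y _ => hasDerivAt_pdy (hG.differentiable one_ne_zero) x y)
    ((by fun_prop : Continuous fun y => pdy G (x, y)).intervalIntegrable _ _)

theorem setIntegral_pdx_eq {F : ℝ × ℝ → ℝ} (hF : ContDiff ℝ 1 F) (hS : IsCompact S) (hab : a ≤ b)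
    (hlr : ∀ y ∈ Icc a b, l y ≤ r y)
    (hmem : ∀ x y, (x, y) ∈ S ↔ y ∈ Icc a b ∧ x ∈ Icc (l y) (r y)) :
    ∫ p in S, pdx F p = ∫ y in a..b, (F (r y, y) - F (l y, y)) := by
  have hswap : ∫ p in Prod.swap ⁻¹' S, pdy (fun q => F q.swap) p = ∫ p in S, pdx F p :=
    (Measure.measurePreserving_swap (μ := (volume : Measure ℝ))
      (ν := (volume : Measure ℝ))).setIntegral_preimage_emb
      MeasurableEquiv.prodComm.measurableEmbedding (pdx F) S
  rw [← hswap]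
  exact setIntegral_pdy_eq (hF.comp (contDiff_snd.prodMk contDiff_fst))
    ((Homeomorph.prodComm ℝ ℝ).isCompact_preimage.2 hS) hab hlr fun y x => hmem x y

end RegionsBetweenGraphs

section StadiumGeometry

variable {α β : ℝ}

theorem mem_wings_iff (hα : 0 ≤ α) (p : ℝ × ℝ) :
    p ∈ Wings α β ↔ (|p.1| - α) ^ 2 + p.2 ^ 2 ≤ β ^ 2 ∧ α ≤ |p.1| := by
  change (_ ∧ _ ∨ _ ∧ _) ↔ _
  rcases le_total 0 p.1 with hx | hx
  · rw [abs_of_nonneg hx]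
    refine ⟨?_, Or.inl⟩
    rintro (h | ⟨h, hxα⟩)
    · exact h
    · constructor <;> nlinarith
  · rw [abs_of_nonpos hx, show (-p.1 - α) ^ 2 = (p.1 + α) ^ 2 by ring]
    refine ⟨?_, fun h => Or.inr ⟨h.1, le_neg.1 h.2⟩⟩
    rintro (⟨h, hxα⟩ | h)
    · constructor <;> nlinarith
    · exact ⟨h.1, le_neg.1 h.2⟩

theorem mem_stadium_iff (hα : 0 ≤ α) (hβ : 0 ≤ β) (p : ℝ × ℝ) :
    p ∈ Stadium α β ↔ max (|p.1| - α) 0 ^ 2 + p.2 ^ 2 ≤ β ^ 2 := by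
  have hrect : p ∈ Rect α β ↔ |p.1| ≤ α ∧ p.2 ^ 2 ≤ β ^ 2 := by
    rw [sq_le_sq, abs_of_nonneg hβ, abs_le, abs_le]
    rfl
  rw [Stadium, mem_union, mem_wings_iff hα, hrect]
  rcases le_total |p.1| α with h | h
  · rw [max_eq_right (sub_nonpos.2 h)]
    constructor
    · rintro (⟨-, hy⟩ | ⟨hd, -⟩) <;> nlinarith [sq_nonneg (|p.1| - α)]
    · exact fun hy => Or.inl ⟨h, by linarith⟩
  · rw [max_eq_left (sub_nonneg.2 h)]
    constructor
    · rintro (⟨hxα, hy⟩ | ⟨hd, -⟩)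
      · rw [le_antisymm hxα h, sub_self]
        linarith
      · exact hd
    · exact fun hd => Or.inr ⟨hd, h⟩

/-- Half the length of the vertical slice of the stadium over the abscissa `x`. -/
def halfHeight (α β x : ℝ) : ℝ := √(β ^ 2 - max (|x| - α) 0 ^ 2)

/-- Half the length of the horizontal slice of the stadium at the ordinate `y`. -/
def halfWidth (α β y : ℝ) : ℝ := α + √(β ^ 2 - y ^ 2)

theorem continuous_halfHeight (α β : ℝ) : Continuous (halfHeight α β) := by
  unfold halfHeight
  fun_prop

theorem continuous_halfWidth (α β : ℝ) : Continuous (halfWidth α β) := by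
  unfold halfWidth
  fun_prop

theorem halfHeight_of_abs_le (hβ : 0 ≤ β) {x : ℝ} (hx : |x| ≤ α) : halfHeight α β x = β := by
  rw [halfHeight, max_eq_right (sub_nonpos.2 hx), zero_pow two_ne_zero, sub_zero, sqrt_sq hβ]

theorem mk_mem_stadium_iff_vertical (hα : 0 ≤ α) (hβ : 0 ≤ β) (x y : ℝ) :
    (x, y) ∈ Stadium α β ↔
      x ∈ Icc (-(α + β)) (α + β) ∧ y ∈ Icc (-halfHeight α β x) (halfHeight α β x) := by
  have hm := le_max_right (|x| - α) 0
  have hwidth : |x| ≤ α + β ↔ max (|x| - α) 0 ^ 2 ≤ β ^ 2 := by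
    rw [sq_le_sq₀ hm hβ, max_le_iff, sub_le_iff_le_add']
    exact (and_iff_left hβ).symm
  rw [mem_stadium_iff hα hβ, mem_Icc, mem_Icc, ← abs_le, ← abs_le, hwidth,
    ← sub_nonneg (b := _ ^ 2), halfHeight]
  constructor
  · intro h
    have hy : y ^ 2 ≤ β ^ 2 - max (|x| - α) 0 ^ 2 := by linarith
    exact ⟨(sq_nonneg y).trans hy, abs_le_sqrt hy⟩
  · rintro ⟨h, hy⟩
    rw [le_sqrt (abs_nonneg y) h, sq_abs] at hy
    linarith

theorem mk_mem_stadium_iff_horizontal (hα : 0 ≤ α) (hβ : 0 ≤ β) (x y : ℝ) :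
    (x, y) ∈ Stadium α β ↔
      y ∈ Icc (-β) β ∧ x ∈ Icc (-halfWidth α β y) (halfWidth α β y) := by
  have hm := le_max_right (|x| - α) 0
  have hheight : |y| ≤ β ↔ 0 ≤ β ^ 2 - y ^ 2 := by
    rw [sub_nonneg, sq_le_sq, abs_of_nonneg hβ]
  have hx : |x| ≤ halfWidth α β y ↔ max (|x| - α) 0 ≤ √(β ^ 2 - y ^ 2) := by
    rw [halfWidth, max_le_iff, sub_le_iff_le_add']
    exact (and_iff_left (sqrt_nonneg _)).symm
  rw [mem_stadium_iff hα hβ, mem_Icc, mem_Icc, ← abs_le, ← abs_le, hheight, hx]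
  constructor
  · intro h
    have hsq : max (|x| - α) 0 ^ 2 ≤ β ^ 2 - y ^ 2 := by linarith
    exact ⟨(sq_nonneg _).trans hsq, le_sqrt_of_sq_le hsq⟩
  · rintro ⟨h, hsq⟩
    rw [le_sqrt hm h] at hsq
    linarith

theorem isCompact_stadium (hα : 0 ≤ α) (hβ : 0 ≤ β) : IsCompact (Stadium α β) := by
  have hclosed : IsClosed (Stadium α β) := by
    have hset : Stadium α β = {p | max (|p.1| - α) 0 ^ 2 + p.2 ^ 2 ≤ β ^ 2} :=
      Set.ext (mem_stadium_iff hα hβ)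
    rw [hset]
    exact isClosed_le (by fun_prop) (by fun_prop)
  exact (isCompact_Icc.prod isCompact_Icc).of_isClosed_subset hclosed fun p hp =>
    ⟨((mk_mem_stadium_iff_vertical hα hβ p.1 p.2).1 hp).1,
      ((mk_mem_stadium_iff_horizontal hα hβ p.1 p.2).1 hp).1⟩

theorem integrableOn_stadium (hα : 0 ≤ α) (hβ : 0 ≤ β) {g : ℝ × ℝ → ℝ} (hg : Continuous g) :
    IntegrableOn g (Stadium α β) :=
  hg.continuousOn.integrableOn_compact (isCompact_stadium hα hβ)

theorem normSq_le_of_mem_stadium (hα : 0 ≤ α) (hβ : 0 ≤ β) {p : ℝ × ℝ} (hp : p ∈ Stadium α β) :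
    p.1 ^ 2 + p.2 ^ 2 ≤ (α + β) ^ 2 := by
  rw [mem_stadium_iff hα hβ] at hp
  set m := max (|p.1| - α) 0
  have hmβ : m ≤ β := le_of_sq_le_sq (by nlinarith) hβ
  have hx : |p.1| ≤ α + m := sub_le_iff_le_add'.1 (le_max_left ..)
  calc p.1 ^ 2 + p.2 ^ 2 = |p.1| ^ 2 + p.2 ^ 2 := by rw [sq_abs]
    _ ≤ (α + m) ^ 2 + (β ^ 2 - m ^ 2) := by gcongr; linarith
    _ = α ^ 2 + 2 * (α * m) + β ^ 2 := by ring
    _ ≤ α ^ 2 + 2 * (α * β) + β ^ 2 := by gcongr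
    _ = (α + β) ^ 2 := by ring

theorem stadiumBoundary_subset (hα : 0 ≤ α) (hβ : 0 ≤ β) : StadiumBoundary α β ⊆ Stadium α β := by
  intro p hp
  rw [mem_stadium_iff hα hβ]
  rcases hp with ⟨hx, hy | hy⟩ | ⟨h, hx⟩
  · rw [max_eq_right (by linarith), hy]
    simp
  · rw [max_eq_right (by linarith), hy]
    simp
  · rw [max_eq_left (by linarith), h]

theorem wing_arcs_mem_stadiumBoundary (hα : 0 ≤ α) (hβ : 0 ≤ β) {θ : ℝ} (hθ : 0 ≤ cos θ) :
    (α + β * cos θ, β * sin θ) ∈ StadiumBoundary α β ∧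
      (-(α + β * cos θ), β * sin θ) ∈ StadiumBoundary α β := by
  have hw : 0 ≤ β * cos θ := by positivity
  have hcircle : (β * cos θ) ^ 2 + (β * sin θ) ^ 2 = β ^ 2 := by
    linear_combination β ^ 2 * sin_sq_add_cos_sq θ
  constructor <;> right <;>
    simpa only [mem_ofPred_eq, abs_neg, abs_of_nonneg (add_nonneg hα hw), add_sub_cancel_left,
      le_add_iff_nonneg_right] using ⟨hcircle, hw⟩

/-- `IsOutwardNormal α β p n`: the vector `n` is the outward unit normal of the stadium at its
boundary point `p`. To read off the normals from the parametrization in `bdryInt`, the four points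
where the flat sides meet the arcs are left out; they are negligible for `bdryInt`. -/
inductive IsOutwardNormal (α β : ℝ) : ℝ × ℝ → ℝ × ℝ → Prop
  | top {x : ℝ} (hx : x ∈ Ioo (-α) α) : IsOutwardNormal α β (x, β) (0, 1)
  | bottom {x : ℝ} (hx : x ∈ Ioo (-α) α) : IsOutwardNormal α β (x, -β) (0, -1)
  | right {θ : ℝ} (hθ : θ ∈ Ioo (-(π / 2)) (π / 2)) :
      IsOutwardNormal α β (α + β * cos θ, β * sin θ) (cos θ, sin θ)
  | left {θ : ℝ} (hθ : θ ∈ Ioo (-(π / 2)) (π / 2)) :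
      IsOutwardNormal α β (-(α + β * cos θ), β * sin θ) (-cos θ, sin θ)

namespace IsOutwardNormal

variable {p n : ℝ × ℝ} {v : ℝ × ℝ → ℝ}

theorem mem_stadiumBoundary (hα : 0 ≤ α) (hβ : 0 ≤ β) (h : IsOutwardNormal α β p n) :
    p ∈ StadiumBoundary α β := by
  cases h with
  | top hx => exact Or.inl ⟨abs_le.2 ⟨hx.1.le, hx.2.le⟩, Or.inl rfl⟩
  | bottom hx => exact Or.inl ⟨abs_le.2 ⟨hx.1.le, hx.2.le⟩, Or.inr rfl⟩
  | right hθ => exact (wing_arcs_mem_stadiumBoundary hα hβ (cos_pos_of_mem_Ioo hθ).le).1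
  | left hθ => exact (wing_arcs_mem_stadiumBoundary hα hβ (cos_pos_of_mem_Ioo hθ).le).2

theorem normSq_eq_one (h : IsOutwardNormal α β p n) : n.1 ^ 2 + n.2 ^ 2 = 1 := by
  cases h <;> simp

theorem le_support (hα : 0 ≤ α) (h : IsOutwardNormal α β p n) :
    β ≤ p.1 * n.1 + p.2 * n.2 := by
  cases h with
  | top hx => simp
  | bottom hx => simp
  | @right θ hθ | @left θ hθ =>
    have hc : 0 ≤ α * cos θ := mul_nonneg hα (cos_pos_of_mem_Ioo hθ).le
    have hsupport : (α + β * cos θ) * cos θ + β * sin θ * sin θ = α * cos θ + β := by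
      linear_combination β * sin_sq_add_cos_sq θ
    simp only [neg_mul_neg]
    linarith

theorem tangential_deriv_eq_zero (hα : 0 ≤ α) (hβ : 0 < β) (h : IsOutwardNormal α β p n)
    (hv : Differentiable ℝ v) (hv0 : ∀ q ∈ StadiumBoundary α β, v q = 0) :
    n.1 * pdy v p - n.2 * pdx v p = 0 := by
  cases h with
  | @top x hx =>
    have := deriv_along_curve_eq_zero hv hv0 (hasDerivAt_id x) (hasDerivAt_const x β) <| by
      filter_upwards [isOpen_Ioo.mem_nhds hx] with t ht using (top ht).mem_stadiumBoundary hα hβ.le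
    simp only [id] at this
    linear_combination -this
  | @bottom x hx =>
    have := deriv_along_curve_eq_zero hv hv0 (hasDerivAt_id x) (hasDerivAt_const x (-β)) <| by
      filter_upwards [isOpen_Ioo.mem_nhds hx] with t ht
        using (bottom ht).mem_stadiumBoundary hα hβ.le
    simp only [id] at this
    linear_combination this
  | @right θ hθ =>
    have := deriv_along_curve_eq_zero hv hv0 (((hasDerivAt_cos θ).const_mul β).const_add α)
      ((hasDerivAt_sin θ).const_mul β) <| by
      filter_upwards [isOpen_Ioo.mem_nhds hθ] with t ht
        using (right ht).mem_stadiumBoundary hα hβ.le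
    refine mul_left_cancel₀ hβ.ne' ?_
    linear_combination this
  | @left θ hθ =>
    have := deriv_along_curve_eq_zero hv hv0 (((hasDerivAt_cos θ).const_mul β).const_add α).fun_neg
      ((hasDerivAt_sin θ).const_mul β) <| by
      filter_upwards [isOpen_Ioo.mem_nhds hθ] with t ht
        using (left ht).mem_stadiumBoundary hα hβ.le
    refine mul_left_cancel₀ hβ.ne' ?_
    linear_combination -this

theorem pdx_eq_mul_nderiv (hα : 0 ≤ α) (hβ : 0 < β) (h : IsOutwardNormal α β p n)
    (hv : Differentiable ℝ v) (hv0 : ∀ q ∈ StadiumBoundary α β, v q = 0) :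
    pdx v p = n.1 * nderiv v p n := by
  have htan := h.tangential_deriv_eq_zero hα hβ hv hv0
  rw [nderiv]
  linear_combination -pdx v p * h.normSq_eq_one - n.2 * htan

theorem pdy_eq_mul_nderiv (hα : 0 ≤ α) (hβ : 0 < β) (h : IsOutwardNormal α β p n)
    (hv : Differentiable ℝ v) (hv0 : ∀ q ∈ StadiumBoundary α β, v q = 0) :
    pdy v p = n.2 * nderiv v p n := by
  have htan := h.tangential_deriv_eq_zero hα hβ hv hv0
  rw [nderiv]
  linear_combination -pdy v p * h.normSq_eq_one + n.1 * htan

end IsOutwardNormal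

end StadiumGeometry

section BoundaryIntegral

variable {α β : ℝ} {g h : ℝ × ℝ → ℝ × ℝ → ℝ}

theorem bdryInt_congr (hα : 0 ≤ α) (hgh : ∀ p n, IsOutwardNormal α β p n → g p n = h p n) :
    bdryInt α β g = bdryInt α β h := by
  simp only [bdryInt]
  congr 1
  · exact intervalIntegral.integral_congr_Ioo_of_le (neg_le_self hα) fun x hx => by
      simp only [hgh _ _ (.top hx), hgh _ _ (.bottom hx)]
  · congr 1
    exact intervalIntegral.integral_congr_Ioo_of_le (by linarith [pi_pos]) fun θ hθ => by
      simp only [hgh _ _ (.right hθ), hgh _ _ (.left hθ)]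

theorem bdryInt_mono (hα : 0 ≤ α) (hβ : 0 ≤ β) (hg : Continuous ↿g) (hh : Continuous ↿h)
    (hgh : ∀ p n, IsOutwardNormal α β p n → g p n ≤ h p n) : bdryInt α β g ≤ bdryInt α β h := by
  refine add_le_add ?_ (mul_le_mul_of_nonneg_left ?_ hβ)
  · exact intervalIntegral.integral_mono_on_of_le_Ioo (neg_le_self hα)
      ((by fun_prop : Continuous _).intervalIntegrable _ _)
      ((by fun_prop : Continuous _).intervalIntegrable _ _)
      fun x hx => add_le_add (hgh _ _ (.top hx)) (hgh _ _ (.bottom hx))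
  · exact intervalIntegral.integral_mono_on_of_le_Ioo (by linarith [pi_pos])
      ((by fun_prop : Continuous _).intervalIntegrable _ _)
      ((by fun_prop : Continuous _).intervalIntegrable _ _)
      fun θ hθ => add_le_add (hgh _ _ (.right hθ)) (hgh _ _ (.left hθ))

theorem bdryInt_const_mul (c : ℝ) : bdryInt α β (fun p n => c * g p n) = c * bdryInt α β g := by
  simp only [bdryInt, ← mul_add, intervalIntegral.integral_const_mul]
  ring

theorem bdryInt_add (hg : Continuous ↿g) (hh : Continuous ↿h) :
    bdryInt α β (fun p n => g p n + h p n) = bdryInt α β g + bdryInt α β h := by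
  simp only [bdryInt]
  rw [add_add_add_comm, ← mul_add, ← intervalIntegral.integral_add,
    ← intervalIntegral.integral_add]
  · simp only [add_add_add_comm (g _ _) (h _ _)]
  all_goals exact (by fun_prop : Continuous _).intervalIntegrable _ _

theorem bdryIntW_le_bdryInt (hα : 0 ≤ α) (hg : ∀ p n, 0 ≤ g p n) :
    bdryIntW α β g ≤ bdryInt α β g :=
  le_add_of_nonneg_left <| intervalIntegral.integral_nonneg (neg_le_self hα) fun _ _ =>
    add_nonneg (hg _ _) (hg _ _)

end BoundaryIntegral

section DivergenceTheorem

variable {α β : ℝ} {F G : ℝ × ℝ → ℝ}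

theorem integral_semicircle_sub (hG : Continuous G) (a : ℝ) {r : ℝ} (hr : 0 ≤ r) :
    ∫ x in a..(a + r), (G (x, √(r ^ 2 - (x - a) ^ 2)) - G (x, -√(r ^ 2 - (x - a) ^ 2))) =
      r * ∫ θ in (-(π / 2))..(π / 2), sin θ * G (a + r * cos θ, r * sin θ) := by
  have hsubst := intervalIntegral.integral_comp_mul_deriv (a := 0) (b := π / 2)
    (f := fun θ => a + r * cos θ) (f' := fun θ => r * -sin θ)
    (g := fun x => G (x, √(r ^ 2 - (x - a) ^ 2)) - G (x, -√(r ^ 2 - (x - a) ^ 2)))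
    (fun θ _ => ((hasDerivAt_cos θ).const_mul r).const_add a) (by fun_prop) (by fun_prop)
  simp only [cos_zero, cos_pi_div_two, mul_one, mul_zero, add_zero] at hsubst
  rw [intervalIntegral.integral_symm, ← hsubst, intervalIntegral_neg_self (by fun_prop),
    ← intervalIntegral.integral_const_mul, ← intervalIntegral.integral_neg]
  refine intervalIntegral.integral_congr fun θ hθ => ?_
  rw [uIcc_of_le (by positivity)] at hθ
  have hsin : 0 ≤ sin θ := sin_nonneg_of_nonneg_of_le_pi hθ.1 (by linarith [hθ.2, pi_pos])
  have hheight : √(r ^ 2 - (a + r * cos θ - a) ^ 2) = r * sin θ := by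
    have hsq : r ^ 2 - (a + r * cos θ - a) ^ 2 = (r * sin θ) ^ 2 := by
      linear_combination -r ^ 2 * sin_sq_add_cos_sq θ
    rw [hsq, sqrt_sq (by positivity)]
  simp only [Function.comp, hheight, cos_neg, sin_neg, mul_neg]
  ring

theorem integral_pdx_stadium (hα : 0 ≤ α) (hβ : 0 ≤ β) (hF : ContDiff ℝ 1 F) :
    ∫ p in Stadium α β, pdx F p = bdryInt α β fun p n => n.1 * F p := by
  have hwidth (y : ℝ) : 0 ≤ halfWidth α β y := add_nonneg hα (sqrt_nonneg _)
  have hFc := hF.continuous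
  have hwc := continuous_halfWidth α β
  rw [setIntegral_pdx_eq hF (isCompact_stadium hα hβ) (neg_le_self hβ)
    (fun y _ => neg_le_self (hwidth y)) (mk_mem_stadium_iff_horizontal hα hβ)]
  have hsubst := intervalIntegral.integral_comp_mul_deriv (a := -(π / 2)) (b := π / 2)
    (f := fun θ => β * sin θ) (f' := fun θ => β * cos θ)
    (g := fun y => F (halfWidth α β y, y) - F (-halfWidth α β y, y))
    (fun θ _ => (hasDerivAt_sin θ).const_mul β) (by fun_prop) (by fun_prop)
  simp only [sin_neg, sin_pi_div_two, mul_one, mul_neg] at hsubst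
  simp only [bdryInt, zero_mul, add_zero, intervalIntegral.integral_zero, zero_add]
  rw [← hsubst, ← intervalIntegral.integral_const_mul]
  refine intervalIntegral.integral_congr fun θ hθ => ?_
  rw [uIcc_of_le (by linarith [pi_pos])] at hθ
  have hcos := cos_nonneg_of_mem_Icc hθ
  have hwidth_sin : halfWidth α β (β * sin θ) = α + β * cos θ := by
    have hsq : β ^ 2 - (β * sin θ) ^ 2 = (β * cos θ) ^ 2 := by
      linear_combination -β ^ 2 * sin_sq_add_cos_sq θ
    rw [halfWidth, hsq, sqrt_sq (by positivity)]
  simp only [Function.comp, hwidth_sin]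
  ring

theorem integral_pdy_stadium (hα : 0 ≤ α) (hβ : 0 ≤ β) (hG : ContDiff ℝ 1 G) :
    ∫ p in Stadium α β, pdy G p = bdryInt α β fun p n => n.2 * G p := by
  have hGc := hG.continuous
  have hhc := continuous_halfHeight α β
  have heven (x : ℝ) : halfHeight α β (-x) = halfHeight α β x := by simp only [halfHeight, abs_neg]
  set H : ℝ × ℝ → ℝ := fun p => G p + G (-p.1, p.2)
  have hHc : Continuous H := by fun_prop
  have hslice : Continuous fun x => H (x, halfHeight α β x) - H (x, -halfHeight α β x) := by
    fun_prop
  have hflat : ∫ x in 0..α, (H (x, halfHeight α β x) - H (x, -halfHeight α β x)) =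
      ∫ x in (-α)..α, (G (x, β) - G (x, -β)) := by
    rw [intervalIntegral_neg_self (by fun_prop)]
    refine intervalIntegral.integral_congr fun x hx => ?_
    rw [uIcc_of_le hα] at hx
    simp only [H, halfHeight_of_abs_le hβ ((abs_of_nonneg hx.1).trans_le hx.2)]
    ring
  have harc : ∫ x in α..(α + β), (H (x, halfHeight α β x) - H (x, -halfHeight α β x)) =
      β * ∫ θ in (-(π / 2))..(π / 2), sin θ * H (α + β * cos θ, β * sin θ) := by
    rw [← integral_semicircle_sub hHc α hβ]
    refine intervalIntegral.integral_congr fun x hx => ?_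
    rw [uIcc_of_le (le_add_of_nonneg_right hβ)] at hx
    simp only [halfHeight, abs_of_nonneg (hα.trans hx.1), max_eq_left (sub_nonneg.2 hx.1)]
  calc ∫ p in Stadium α β, pdy G p
      = ∫ x in (-(α + β))..(α + β), (G (x, halfHeight α β x) - G (x, -halfHeight α β x)) :=
        setIntegral_pdy_eq hG (isCompact_stadium hα hβ) (neg_le_self (add_nonneg hα hβ))
          (fun x _ => neg_le_self (sqrt_nonneg _)) (mk_mem_stadium_iff_vertical hα hβ)
    _ = ∫ x in 0..(α + β), (H (x, halfHeight α β x) - H (x, -halfHeight α β x)) := by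
        rw [intervalIntegral_neg_self (by fun_prop)]
        simp only [H, heven, add_sub_add_comm]
    _ = (∫ x in (-α)..α, (G (x, β) - G (x, -β))) +
          β * ∫ θ in (-(π / 2))..(π / 2), sin θ * H (α + β * cos θ, β * sin θ) := by
        rw [← hflat, ← harc, intervalIntegral.integral_add_adjacent_intervals
          (hslice.intervalIntegrable _ _) (hslice.intervalIntegrable _ _)]
    _ = bdryInt α β fun p n => n.2 * G p := by
        simp only [bdryInt, H, mul_add, one_mul, neg_one_mul, sub_eq_add_neg]

theorem divergence_theorem_stadium (hα : 0 ≤ α) (hβ : 0 ≤ β) (hF : ContDiff ℝ 1 F)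
    (hG : ContDiff ℝ 1 G) :
    ∫ p in Stadium α β, (pdx F p + pdy G p) = bdryInt α β fun p n => n.1 * F p + n.2 * G p := by
  have hFc := hF.continuous
  have hGc := hG.continuous
  rw [bdryInt_add (by fun_prop) (by fun_prop), ← integral_pdx_stadium hα hβ hF,
    ← integral_pdy_stadium hα hβ hG]
  exact integral_add
    (integrableOn_stadium hα hβ (contDiff_pdx (m := 0) hF (zero_add 1).le).continuous)
    (integrableOn_stadium hα hβ (contDiff_pdy (m := 0) hG (zero_add 1).le).continuous)

end DivergenceTheorem

/-- The derivative `X v = x ∂_x v + y ∂_y v` along the radial field `X = (x, y)`, the multiplier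
in the Rellich identity. -/
def radialDeriv (v : ℝ × ℝ → ℝ) (p : ℝ × ℝ) : ℝ := p.1 * pdx v p + p.2 * pdy v p

/-- The inner product `∇v · ∇w` of two gradients; `gradInner v v` is the energy density of `v`. -/
def gradInner (v w : ℝ × ℝ → ℝ) (p : ℝ × ℝ) : ℝ := pdx v p * pdx w p + pdy v p * pdy w p

section IntegralIdentities

variable {α β : ℝ} {v w : ℝ × ℝ → ℝ}

theorem contDiff_radialDeriv {m n : WithTop ℕ∞} (hv : ContDiff ℝ n v) (hmn : m + 1 ≤ n) :
    ContDiff ℝ m (radialDeriv v) :=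
  (contDiff_fst.mul (contDiff_pdx hv hmn)).add (contDiff_snd.mul (contDiff_pdy hv hmn))

theorem contDiff_gradInner {m n : WithTop ℕ∞} (hv : ContDiff ℝ n v) (hw : ContDiff ℝ n w)
    (hmn : m + 1 ≤ n) : ContDiff ℝ m (gradInner v w) :=
  ((contDiff_pdx hv hmn).mul (contDiff_pdx hw hmn)).add
    ((contDiff_pdy hv hmn).mul (contDiff_pdy hw hmn))

theorem pdx_radialDeriv (hv : ContDiff ℝ 2 v) (p : ℝ × ℝ) :
    pdx (radialDeriv v) p = pdx v p + radialDeriv (pdx v) p := by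
  have hx := (contDiff_pdx hv one_add_one_eq_two.le).differentiable one_ne_zero
  have hy := (contDiff_pdy hv one_add_one_eq_two.le).differentiable one_ne_zero
  have hderiv := (((hasDerivAt_id p.1).mul (hasDerivAt_pdx hx p.1 p.2)).add
    ((hasDerivAt_pdx hy p.1 p.2).const_mul p.2)).deriv
  refine Eq.trans hderiv ?_
  simp only [radialDeriv, id, pdx_pdy_comm hv]
  ring

theorem pdy_radialDeriv (hv : ContDiff ℝ 2 v) (p : ℝ × ℝ) :
    pdy (radialDeriv v) p = pdy v p + radialDeriv (pdy v) p := by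
  have hx := (contDiff_pdx hv one_add_one_eq_two.le).differentiable one_ne_zero
  have hy := (contDiff_pdy hv one_add_one_eq_two.le).differentiable one_ne_zero
  have hderiv := (((hasDerivAt_pdy hx p.1 p.2).const_mul p.1).add
    ((hasDerivAt_id p.2).mul (hasDerivAt_pdy hy p.1 p.2))).deriv
  refine Eq.trans hderiv ?_
  simp only [radialDeriv, id, pdx_pdy_comm hv]
  ring

theorem radialDeriv_add (hv : Differentiable ℝ v) (hw : Differentiable ℝ w) (p : ℝ × ℝ) :
    radialDeriv (fun q => v q + w q) p = radialDeriv v p + radialDeriv w p := by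
  simp only [radialDeriv, pdx_add hv hw, pdy_add hv hw]
  ring

theorem radialDeriv_mul (hv : Differentiable ℝ v) (hw : Differentiable ℝ w) (p : ℝ × ℝ) :
    radialDeriv (fun q => v q * w q) p = radialDeriv v p * w p + v p * radialDeriv w p := by
  simp only [radialDeriv, pdx_mul hv hw, pdy_mul hv hw]
  ring

theorem radialDeriv_gradInner_self (hv : ContDiff ℝ 2 v) (p : ℝ × ℝ) :
    radialDeriv (gradInner v v) p = 2 * (gradInner (radialDeriv v) v p - gradInner v v p) := by
  have hx := (contDiff_pdx hv one_add_one_eq_two.le).differentiable one_ne_zero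
  have hy := (contDiff_pdy hv one_add_one_eq_two.le).differentiable one_ne_zero
  have hsplit : radialDeriv (gradInner v v) p =
      radialDeriv (fun q => pdx v q * pdx v q) p + radialDeriv (fun q => pdy v q * pdy v q) p :=
    radialDeriv_add (hx.mul hx) (hy.mul hy) p
  rw [hsplit, radialDeriv_mul hx hx, radialDeriv_mul hy hy, gradInner, gradInner,
    pdx_radialDeriv hv, pdy_radialDeriv hv]
  ring

theorem radialDeriv_sq_le (v : ℝ × ℝ → ℝ) (p : ℝ × ℝ) :
    radialDeriv v p ^ 2 ≤ (p.1 ^ 2 + p.2 ^ 2) * gradInner v v p := by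
  have lagrange : (p.1 ^ 2 + p.2 ^ 2) * gradInner v v p =
      radialDeriv v p ^ 2 + (p.1 * pdy v p - p.2 * pdx v p) ^ 2 := by
    simp only [radialDeriv, gradInner]
    ring
  rw [lagrange]
  exact le_add_of_nonneg_right (sq_nonneg _)

theorem integral_radialDeriv_add_two_mul (hα : 0 ≤ α) (hβ : 0 ≤ β) (hv : ContDiff ℝ 1 v) :
    ∫ p in Stadium α β, (radialDeriv v p + 2 * v p) =
      bdryInt α β fun p n => (p.1 * n.1 + p.2 * n.2) * v p := by
  have hd := hv.differentiable one_ne_zero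
  have hdiv (p : ℝ × ℝ) : radialDeriv v p + 2 * v p =
      pdx (fun q => q.1 * v q) p + pdy (fun q => q.2 * v q) p := by
    rw [pdx_mul differentiable_fst hd, pdy_mul differentiable_snd hd, radialDeriv]
    simp only [pdx, pdy, deriv_id'']
    ring
  simp only [hdiv]
  rw [divergence_theorem_stadium hα hβ (contDiff_fst.mul hv) (contDiff_snd.mul hv)]
  congr 1 with p n
  ring

theorem green_identity_stadium (hα : 0 ≤ α) (hβ : 0 ≤ β) (hv : ContDiff ℝ 1 v)
    (hw : ContDiff ℝ 2 w) :
    ∫ p in Stadium α β, (gradInner v w p - v p * lap w p) =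
      bdryInt α β fun p n => v p * nderiv w p n := by
  have hd := hv.differentiable one_ne_zero
  have hx := contDiff_pdx hw one_add_one_eq_two.le
  have hy := contDiff_pdy hw one_add_one_eq_two.le
  have hdiv (p : ℝ × ℝ) : gradInner v w p - v p * lap w p =
      pdx (fun q => v q * pdx w q) p + pdy (fun q => v q * pdy w q) p := by
    rw [pdx_mul hd (hx.differentiable one_ne_zero), pdy_mul hd (hy.differentiable one_ne_zero),
      gradInner, lap]
    ring
  simp only [hdiv]
  rw [divergence_theorem_stadium hα hβ (hv.mul hx) (hv.mul hy)]
  congr 1 with p n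
  rw [nderiv]
  ring

theorem rellich_identity_stadium (hα : 0 ≤ α) (hβ : 0 ≤ β) (hv : ContDiff ℝ 2 v) :
    ∫ p in Stadium α β, radialDeriv v p * lap v p =
      2⁻¹ * bdryInt α β (fun p n => (p.1 * n.1 + p.2 * n.2) * gradInner v v p) -
        bdryInt α β fun p n => radialDeriv v p * nderiv v p n := by
  have hX := contDiff_radialDeriv hv one_add_one_eq_two.le
  have hE := contDiff_gradInner hv hv one_add_one_eq_two.le
  have hEc := hE.continuous
  have hXE := contDiff_radialDeriv (m := 0) hE (zero_add 1).le |>.continuous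
  have hXv := contDiff_gradInner (m := 0) hX (hv.of_le one_le_two) (zero_add 1).le |>.continuous
  have hlap := continuous_lap hv
  have hXc := hX.continuous
  rw [← integral_radialDeriv_add_two_mul hα hβ hE, ← green_identity_stadium hα hβ hX hv,
    ← integral_const_mul, ← integral_sub (integrableOn_stadium hα hβ (by fun_prop))
      (integrableOn_stadium hα hβ (by fun_prop))]
  simp only [radialDeriv_gradInner_self hv]
  congr 1 with p
  ring

section Dirichlet

variable (hα : 0 ≤ α) (hβ : 0 ≤ β) (hv0 : ∀ p ∈ StadiumBoundary α β, v p = 0)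
include hα hβ hv0

theorem bdryInt_eq_zero_of_dirichlet (g : ℝ × ℝ → ℝ × ℝ → ℝ) :
    bdryInt α β (fun p n => v p * g p n) = 0 := by
  have hzero : bdryInt α β (fun p n => v p * g p n) = bdryInt α β fun _ _ => 0 :=
    bdryInt_congr hα fun p n h => by rw [hv0 p (h.mem_stadiumBoundary hα hβ), zero_mul]
  simpa [bdryInt] using hzero

theorem integral_gradInner_self_of_dirichlet (hv : ContDiff ℝ 2 v) :
    ∫ p in Stadium α β, gradInner v v p = ∫ p in Stadium α β, v p * lap v p := by
  have hE := contDiff_gradInner (m := 1) hv hv one_add_one_eq_two.le |>.continuous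
  have hvc := hv.continuous
  have hlap := continuous_lap hv
  rw [← sub_eq_zero, ← integral_sub (integrableOn_stadium hα hβ hE)
    (integrableOn_stadium hα hβ (by fun_prop)),
    green_identity_stadium hα hβ (hv.of_le one_le_two) hv]
  exact bdryInt_eq_zero_of_dirichlet hα hβ hv0 _

theorem integral_mul_radialDeriv_of_dirichlet (hv : ContDiff ℝ 1 v) :
    ∫ p in Stadium α β, v p * radialDeriv v p = -∫ p in Stadium α β, v p ^ 2 := by
  have hd := hv.differentiable one_ne_zero
  have hvc := hv.continuous
  have hX := contDiff_radialDeriv (m := 0) hv (zero_add 1).le |>.continuous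
  have hsum := integral_radialDeriv_add_two_mul hα hβ (hv.mul hv)
  have hpoint (p : ℝ × ℝ) : radialDeriv (fun q => v q * v q) p + 2 * (v p * v p) =
      2 * (v p * radialDeriv v p + v p ^ 2) := by
    rw [radialDeriv_mul hd hd]
    ring
  have hbdry : bdryInt α β (fun p n => (p.1 * n.1 + p.2 * n.2) * (v p * v p)) = 0 := by
    simp only [mul_left_comm _ (v _) (v _)]
    exact bdryInt_eq_zero_of_dirichlet hα hβ hv0 _
  simp only [hpoint] at hsum
  rw [hbdry, integral_const_mul,
    integral_add (integrableOn_stadium hα hβ (by fun_prop))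
      (integrableOn_stadium hα hβ (by fun_prop))] at hsum
  linarith

end Dirichlet

theorem rellich_identity_stadium_of_dirichlet (hα : 0 ≤ α) (hβ : 0 < β)
    (hv0 : ∀ p ∈ StadiumBoundary α β, v p = 0) (hv : ContDiff ℝ 2 v) :
    ∫ p in Stadium α β, radialDeriv v p * lap v p =
      -(2⁻¹ * bdryInt α β fun p n => (p.1 * n.1 + p.2 * n.2) * nderiv v p n ^ 2) := by
  have hd := hv.differentiable two_ne_zero
  have henergy : bdryInt α β (fun p n => (p.1 * n.1 + p.2 * n.2) * gradInner v v p) =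
      bdryInt α β fun p n => (p.1 * n.1 + p.2 * n.2) * nderiv v p n ^ 2 :=
    bdryInt_congr hα fun p n h => by
      rw [gradInner, h.pdx_eq_mul_nderiv hα hβ hd hv0, h.pdy_eq_mul_nderiv hα hβ hd hv0]
      linear_combination (p.1 * n.1 + p.2 * n.2) * nderiv v p n ^ 2 * h.normSq_eq_one
  have hradial : bdryInt α β (fun p n => radialDeriv v p * nderiv v p n) =
      bdryInt α β fun p n => (p.1 * n.1 + p.2 * n.2) * nderiv v p n ^ 2 :=
    bdryInt_congr hα fun p n h => by
      rw [radialDeriv, h.pdx_eq_mul_nderiv hα hβ hd hv0, h.pdy_eq_mul_nderiv hα hβ hd hv0]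
      ring
  rw [rellich_identity_stadium hα hβ.le hv, henergy, hradial]
  ring

end IntegralIdentities

section BoundaryEstimate

variable {α β : ℝ} {v : ℝ × ℝ → ℝ}

theorem integral_sq_radialDeriv_le (hα : 0 ≤ α) (hβ : 0 ≤ β) (hv : ContDiff ℝ 1 v) :
    ∫ p in Stadium α β, radialDeriv v p ^ 2 ≤
      (α + β) ^ 2 * ∫ p in Stadium α β, gradInner v v p := by
  have hX := contDiff_radialDeriv (m := 0) hv (zero_add 1).le |>.continuous
  have hE := contDiff_gradInner (m := 0) hv hv (zero_add 1).le |>.continuous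
  rw [← integral_const_mul]
  refine setIntegral_mono_on (integrableOn_stadium hα hβ (by fun_prop))
    (integrableOn_stadium hα hβ (by fun_prop)) (isCompact_stadium hα hβ).measurableSet
    fun p hp => (radialDeriv_sq_le v p).trans ?_
  have henergy : 0 ≤ gradInner v v p := add_nonneg (mul_self_nonneg _) (mul_self_nonneg _)
  exact mul_le_mul_of_nonneg_right (normSq_le_of_mem_stadium hα hβ hp) henergy

theorem poincare_stadium (hα : 0 ≤ α) (hβ : 0 ≤ β) (hv : ContDiff ℝ 1 v)
    (hv0 : ∀ p ∈ StadiumBoundary α β, v p = 0) :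
    ∫ p in Stadium α β, v p ^ 2 ≤ (α + β) ^ 2 * ∫ p in Stadium α β, gradInner v v p := by
  have hvc := hv.continuous
  have hX := contDiff_radialDeriv (m := 0) hv (zero_add 1).le |>.continuous
  have young := two_mul_integral_mul_le (μ := volume.restrict (Stadium α β)) (f := v)
    (g := fun p => -radialDeriv v p) (integrableOn_stadium hα hβ (by fun_prop))
    (integrableOn_stadium hα hβ (by fun_prop)) (integrableOn_stadium hα hβ (by fun_prop)) one_pos
  simp only [mul_neg, integral_neg, integral_mul_radialDeriv_of_dirichlet hα hβ hv0 hv, neg_sq,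
    neg_neg, inv_one, one_mul] at young
  linarith [integral_sq_radialDeriv_le hα hβ hv]

section Helmholtz

variable (hα : 0 ≤ α) (hβ : 0 < β) (hv : ContDiff ℝ 2 v)
  (hv0 : ∀ p ∈ StadiumBoundary α β, v p = 0) (c : ℝ)
include hα hβ hv hv0

theorem integral_gradInner_self_le :
    ∫ p in Stadium α β, gradInner v v p ≤ 2 * c * (∫ p in Stadium α β, v p ^ 2) +
      (α + β) ^ 2 * ∫ p in Stadium α β, (lap v p - c * v p) ^ 2 := by
  have hvc := hv.continuous
  have hlap := continuous_lap hv
  have hsplit : ∫ p in Stadium α β, gradInner v v p = c * (∫ p in Stadium α β, v p ^ 2) +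
      ∫ p in Stadium α β, v p * (lap v p - c * v p) := by
    rw [integral_gradInner_self_of_dirichlet hα hβ.le hv0 hv, ← integral_const_mul,
      ← integral_add (integrableOn_stadium hα hβ.le (by fun_prop))
        (integrableOn_stadium hα hβ.le (by fun_prop))]
    congr 1 with p
    ring
  have hM : 0 < (α + β) ^ 2 := by positivity
  have young := two_mul_integral_mul_le (μ := volume.restrict (Stadium α β)) (f := v)
    (g := fun p => lap v p - c * v p) (integrableOn_stadium hα hβ.le (by fun_prop))
    (integrableOn_stadium hα hβ.le (by fun_prop)) (integrableOn_stadium hα hβ.le (by fun_prop))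
    (inv_pos.2 hM)
  have hpoincare := (inv_mul_le_iff₀ hM).2 (poincare_stadium hα hβ.le (hv.of_le one_le_two) hv0)
  rw [inv_inv] at young
  linarith

theorem bdryInt_nderiv_sq_le :
    bdryInt α β (fun p n => nderiv v p n ^ 2) ≤ 4 / β * c * (∫ p in Stadium α β, v p ^ 2) +
      2 * (α + β) ^ 2 / β * ∫ p in Stadium α β, (lap v p - c * v p) ^ 2 := by
  have hvc := hv.continuous
  have hlap := continuous_lap hv
  have hX := contDiff_radialDeriv hv one_add_one_eq_two.le |>.continuous
  have hN := continuous_nderiv (hv.of_le one_le_two)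
  have hsupport : β * bdryInt α β (fun p n => nderiv v p n ^ 2) ≤
      bdryInt α β fun p n => (p.1 * n.1 + p.2 * n.2) * nderiv v p n ^ 2 := by
    rw [← bdryInt_const_mul]
    exact bdryInt_mono hα hβ.le (by fun_prop) (by fun_prop) fun p n h =>
      mul_le_mul_of_nonneg_right (h.le_support hα) (sq_nonneg _)
  have hrellich := rellich_identity_stadium_of_dirichlet hα hβ hv0 hv
  have hsplit : ∫ p in Stadium α β, radialDeriv v p * lap v p =
      -(c * ∫ p in Stadium α β, v p ^ 2) -
        ∫ p in Stadium α β, -radialDeriv v p * (lap v p - c * v p) := by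
    rw [← mul_neg, ← integral_mul_radialDeriv_of_dirichlet hα hβ.le hv0 (hv.of_le one_le_two),
      ← integral_const_mul, ← integral_sub (integrableOn_stadium hα hβ.le (by fun_prop))
        (integrableOn_stadium hα hβ.le (by fun_prop))]
    congr 1 with p
    ring
  have hM : 0 < (α + β) ^ 2 := by positivity
  have young := two_mul_integral_mul_le (μ := volume.restrict (Stadium α β))
    (f := fun p => -radialDeriv v p) (g := fun p => lap v p - c * v p)
    (integrableOn_stadium hα hβ.le (by fun_prop)) (integrableOn_stadium hα hβ.le (by fun_prop))
    (integrableOn_stadium hα hβ.le (by fun_prop)) (inv_pos.2 hM)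
  simp only [neg_sq, inv_inv] at young
  have hradial := (inv_mul_le_iff₀ hM).2
    (integral_sq_radialDeriv_le hα hβ.le (hv.of_le one_le_two))
  have henergy := integral_gradInner_self_le hα hβ hv hv0 c
  have hbound : β * bdryInt α β (fun p n => nderiv v p n ^ 2) ≤
      4 * c * (∫ p in Stadium α β, v p ^ 2) +
        2 * (α + β) ^ 2 * ∫ p in Stadium α β, (lap v p - c * v p) ^ 2 := by linarith
  rw [← le_div_iff₀' hβ] at hbound
  exact hbound.trans_eq (by ring)

end Helmholtz

theorem integral_sublevel_nderiv_sq_le (hβ : 0 ≤ β) (hv : ContDiff ℝ 1 v) {ε : ℝ} (hε : 0 ≤ ε) :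
    β * (∫ θ in {θ : ℝ | θ ∈ Icc (-(π / 2)) (π / 2) ∧ β * cos θ ≤ ε},
      (β * cos θ) * (nderiv v (α + β * cos θ, β * sin θ) (cos θ, sin θ) ^ 2 +
        nderiv v (-(α + β * cos θ), β * sin θ) (-cos θ, sin θ) ^ 2)) ≤
      ε * bdryIntW α β fun p n => nderiv v p n ^ 2 := by
  have hN := continuous_nderiv hv
  rw [bdryIntW, intervalIntegral.integral_of_le (by linarith [pi_pos]),
    ← integral_Icc_eq_integral_Ioc, mul_left_comm]
  refine mul_le_mul_of_nonneg_left ?_ hβ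
  exact setIntegral_sublevel_mul_le measurableSet_Icc (by fun_prop) hε
    (Continuous.integrableOn_Icc (by fun_prop)) (Continuous.integrableOn_Icc (by fun_prop))
    fun θ _ => by positivity

theorem QMDatum.exists_contDiff_representative (hα : 0 ≤ α) (hβ : 0 ≤ β) (d : QMDatum α β) :
    ∃ v : ℝ × ℝ → ℝ, ContDiff ℝ (⊤ : ℕ∞) v ∧ (∀ p ∈ StadiumBoundary α β, v p = 0) ∧
      (∀ p ∈ Stadium α β, v p = d.u p) ∧
      (∀ p ∈ Stadium α β, lap v p - d.lam ^ 2 * v p = d.f p) ∧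
      ∀ p ∈ StadiumBoundary α β, ∀ n, nderiv v p n = nderiv d.u p n := by
  obtain ⟨V, hV, hSV, hu⟩ := d.smooth
  obtain ⟨v, hv, hvu⟩ :=
    exists_contDiff_eventuallyEq_nhdsSet (isCompact_stadium hα hβ).isClosed hV hSV hu
  have heq (p : ℝ × ℝ) (hp : p ∈ Stadium α β) : v p = d.u p := hvu.self_of_nhdsSet hp
  refine ⟨v, hv, fun p hp => ?_, heq, fun p hp => ?_, fun p hp n =>
    nderiv_eq_of_eventuallyEq_nhdsSet hvu (stadiumBoundary_subset hα hβ hp) n⟩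
  · rw [heq p (stadiumBoundary_subset hα hβ hp), d.dirichlet p hp]
  · rw [(lap_eventuallyEq_nhdsSet hvu).self_of_nhdsSet hp, heq p hp, d.eqn p hp]

end BoundaryEstimate

theorem stmt14_general {α β : ℝ} (hα : 0 ≤ α) (hβ : 0 < β) :
    ∃ C₀ > 0, ∃ C > 0, ∀ δ ≥ (0 : ℝ), ∀ d : QMDatum α β,
      β * (∫ θ in {θ : ℝ | θ ∈ Icc (-(π / 2)) (π / 2) ∧ β * cos θ ≤ δ / d.lam ^ 2},
          (β * cos θ) *
            ((nderiv d.u (α + β * cos θ, β * sin θ) (cos θ, sin θ)) ^ 2 +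
             (nderiv d.u (-(α + β * cos θ), β * sin θ) (-cos θ, sin θ)) ^ 2)) ≤
        δ * C₀ * (∫ p in Stadium α β, (d.u p) ^ 2) +
        δ * C * d.lam ^ (-2 : ℤ) * (∫ p in Stadium α β, (d.f p) ^ 2) := by
  refine ⟨4 / β, by positivity, 2 * (α + β) ^ 2 / β, by positivity, fun δ hδ d => ?_⟩
  have hlam := d.lam_pos
  have hmeas := (isCompact_stadium hα hβ.le).measurableSet
  obtain ⟨v, hv, hv0, hu, hf, hnderiv⟩ := d.exists_contDiff_representative hα hβ.le
  have hv2 : ContDiff ℝ 2 v := contDiff_infty.1 hv 2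
  have hbdry := bdryInt_nderiv_sq_le hα hβ hv2 hv0 (d.lam ^ 2)
  rw [setIntegral_congr_fun hmeas fun p hp => congrArg (· ^ 2) (hu p hp),
    setIntegral_congr_fun hmeas fun p hp => congrArg (· ^ 2) (hf p hp)] at hbdry
  calc _ = β * (∫ θ in {θ : ℝ | θ ∈ Icc (-(π / 2)) (π / 2) ∧ β * cos θ ≤ δ / d.lam ^ 2},
        (β * cos θ) * (nderiv v (α + β * cos θ, β * sin θ) (cos θ, sin θ) ^ 2 +
          nderiv v (-(α + β * cos θ), β * sin θ) (-cos θ, sin θ) ^ 2)) := by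
        congr 1
        refine setIntegral_congr_fun (measurableSet_Icc.inter
          (measurableSet_le (measurable_cos.const_mul β) measurable_const)) fun θ hθ => ?_
        obtain ⟨hright, hleft⟩ :=
          wing_arcs_mem_stadiumBoundary hα hβ.le (cos_nonneg_of_mem_Icc hθ.1)
        simp only [hnderiv _ hright, hnderiv _ hleft]
    _ ≤ δ / d.lam ^ 2 * bdryIntW α β fun p n => nderiv v p n ^ 2 :=
        integral_sublevel_nderiv_sq_le hβ.le (hv2.of_le one_le_two) (by positivity)
    _ ≤ δ / d.lam ^ 2 * bdryInt α β fun p n => nderiv v p n ^ 2 :=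
        mul_le_mul_of_nonneg_left (bdryIntW_le_bdryInt hα fun _ _ => sq_nonneg _) (by positivity)
    _ ≤ δ / d.lam ^ 2 * _ := mul_le_mul_of_nonneg_left hbdry (by positivity)
    _ = _ := by
        rw [zpow_neg, zpow_ofNat]
        field_simp

/-- Region I estimate: there is `C₀ > 0` depending only on `α, β` such that
for every `δ > 0` there are `C > 0` and `λ₀ > 0` with: every real Dirichlet quasimode
datum with `λ ≥ λ₀` satisfies
`∫_{∂S ∩ W ∩ {w ≤ δλ⁻²}} w |∂_N u|² dl ≤ δ C₀ ‖u‖²_{L²(S)} + δ C λ⁻² ‖f‖²_{L²(S)}`. -/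
theorem stmt14 (α β : ℝ) (hα : 0 < α) (hβ : 0 < β) :
    ∃ C₀ > 0, ∀ δ > (0 : ℝ), ∃ C > 0, ∃ lam₀ > 0, ∀ d : QMDatum α β, d.lam ≥ lam₀ →
      β * (∫ θ in {θ : ℝ | θ ∈ Icc (-(π / 2)) (π / 2) ∧ β * cos θ ≤ δ / d.lam ^ 2},
          (β * cos θ) *
            ((nderiv d.u (α + β * cos θ, β * sin θ) (cos θ, sin θ)) ^ 2 +
             (nderiv d.u (-(α + β * cos θ), β * sin θ) (-cos θ, sin θ)) ^ 2)) ≤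
        δ * C₀ * (∫ p in Stadium α β, (d.u p) ^ 2) +
        δ * C * d.lam ^ (-2 : ℤ) * (∫ p in Stadium α β, (d.f p) ^ 2) := by
  obtain ⟨C₀, hC₀, C, hC, hmain⟩ := stmt14_general hα.le hβ
  exact ⟨C₀, hC₀, fun δ hδ => ⟨C, hC, 1, one_pos, fun d _ => hmain δ hδ.le d⟩⟩
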